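/- If I is an unmixed ass-decomposable monomial ideal in R = K[x_1,…,x_n], then its radical √I is also an ass-decomposable monomial ideal. -/

import Mathlib

open MvPolynomial

namespace Paper

/-- A monomial ideal: an ideal generated by monomials. -/
def IsMonomialIdeal {n : ℕ} {K : Type} [Field K] (I : Ideal (MvPolynomial (Fin n) K)) : Prop :=
  ∃ S : Set (Fin n →₀ ℕ), I = Ideal.span ((fun a => monomial a (1 : K)) '' S)

/-- A squarefree monomial ideal: an ideal generated by squarefree monomials. -/
def IsSquarefreeMonomialIdeal {n : ℕ} {K : Type} [Field K]
    (I : Ideal (MvPolynomial (Fin n) K)) : Prop :=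
  ∃ S : Set (Fin n →₀ ℕ), (∀ a ∈ S, ∀ i, a i ≤ 1) ∧
    I = Ideal.span ((fun a => monomial a (1 : K)) '' S)

/-- An ideal `I` is unmixed if `dim A/I = dim A/𝔭` for every associated prime `𝔭` of `I`. -/
def IsUnmixed {A : Type} [CommRing A] (I : Ideal A) : Prop :=
  ∀ 𝔭 ∈ associatedPrimes A (A ⧸ I), ringKrullDim (A ⧸ I) = ringKrullDim (A ⧸ 𝔭)

/-- ass-decomposable ideals: `I` is ass-decomposable if it is primary, or there are a
variable `x_i ∉ √I` and `k ≥ 1` with `ass(I + (x_i^k)) = {𝔭 ∈ ass(I) : x_i ∈ 𝔭}` such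
that `I + (x_i^k)` and `I : x_i^k` are both ass-decomposable. -/
inductive IsAssDecomposable {n : ℕ} {K : Type} [Field K] :
    Ideal (MvPolynomial (Fin n) K) → Prop
  | primary {I : Ideal (MvPolynomial (Fin n) K)} (h : I.IsPrimary) : IsAssDecomposable I
  | step {I : Ideal (MvPolynomial (Fin n) K)} (i : Fin n) (k : ℕ) (hk : 1 ≤ k)
      (hx : X i ∉ I.radical)
      (hass : associatedPrimes (MvPolynomial (Fin n) K)
          (MvPolynomial (Fin n) K ⧸ (I + Ideal.span {(X i : MvPolynomial (Fin n) K) ^ k})) =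
        {𝔭 ∈ associatedPrimes (MvPolynomial (Fin n) K) (MvPolynomial (Fin n) K ⧸ I) |
          (X i : MvPolynomial (Fin n) K) ∈ 𝔭})
      (h1 : IsAssDecomposable (I + Ideal.span {(X i : MvPolynomial (Fin n) K) ^ k}))
      (h2 : IsAssDecomposable (I.colon (Ideal.span {(X i : MvPolynomial (Fin n) K) ^ k}))) :
      IsAssDecomposable I

/-!
Let `I` be monomial without embedded primes. Induction on a decomposition of `I` shows that
`√I : m` is ass-decomposable for every monomial `m ∉ √I`; the case `m = 1` is the goal. The extra
colon by `m` is forced on the induction: `√(I : x^k)` and `√I : x` may differ, but they agree after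
a further colon by any multiple of `x`. So the right branch `I : x^k` of the decomposition settles
all `m` divisible by `x`. When `x ∤ m`, substituting `x = 0` maps the monomial ideal `I` into itself
and gives `(√I : m) + (x) = √(I + (x^k)) : m`, which is settled by the left branch, while
`(√I : m) : x = √I : mx` is of the kind already treated. The condition on associated primes survives
because `ass(√I : m)` consists of the associated primes of `I` that do not contain `m`.
-/

section Colon

variable {A : Type*} [CommRing A] {I P : Ideal A}

lemma colon_singleton_eq_top_iff {m : A} : I.colon {m} = ⊤ ↔ m ∈ I := by
  rw [Submodule.colon_eq_top_iff_subset, Set.singleton_subset_iff, SetLike.mem_coe]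

lemma colon_singleton_colon_singleton (I : Ideal A) (a b : A) :
    (I.colon {a}).colon {b} = I.colon {a * b} := by
  ext f
  simp only [Submodule.mem_colon_singleton, smul_eq_mul, mul_assoc, mul_comm b a]

lemma isRadical_colon_singleton (hI : I.IsRadical) (m : A) : (I.colon {m}).IsRadical := by
  rintro f ⟨N, hN⟩
  rw [Submodule.mem_colon_singleton, smul_eq_mul] at hN ⊢
  refine hI ⟨N + 1, ?_⟩
  rw [show (f * m) ^ (N + 1) = f ^ N * m * (f * m ^ N) by ring]
  exact I.mul_mem_right _ hN

lemma colon_singleton_le_of_notMem [hP : P.IsPrime] (hIP : I ≤ P) {m : A} (hm : m ∉ P) :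
    I.colon {m} ≤ P := fun _ hf =>
  (hP.mem_or_mem (hIP (Submodule.mem_colon_singleton.1 hf))).resolve_right hm

lemma colon_singleton_eq_self_of_isPrime [P.IsPrime] {m : A} (hm : m ∉ P) : P.colon {m} = P :=
  (colon_singleton_le_of_notMem le_rfl hm).antisymm Ideal.le_colon

lemma radical_colon_pow_colon_singleton (I : Ideal A) {x m : A} (hxm : x ∣ m) (k : ℕ) :
    (I.colon {x ^ k}).radical.colon {m} = I.radical.colon {m} := by
  obtain ⟨c, rfl⟩ := hxm
  ext f
  simp only [Submodule.mem_colon_singleton, smul_eq_mul, Ideal.mem_radical_iff]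
  constructor
  · rintro ⟨N, hN⟩
    refine ⟨N + k, ?_⟩
    rw [show (f * (x * c)) ^ (N + k) = (f * (x * c)) ^ N * x ^ k * (f * c) ^ k by ring]
    exact I.mul_mem_right _ hN
  · rintro ⟨N, hN⟩
    exact ⟨N, I.mul_mem_right _ hN⟩

lemma minimalPrimes_colon_singleton (hI : I.IsRadical) (m : A) :
    (I.colon {m}).minimalPrimes = {p ∈ I.minimalPrimes | m ∉ p} := by
  ext p
  constructor
  · intro hp
    have hm : m ∉ p := by
      intro hmp
      obtain ⟨y, hy, hmy⟩ := Ideal.exists_mul_mem_of_mem_minimalPrimes hp hmp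
      rw [Submodule.mem_colon_singleton, smul_eq_mul] at hy hmy
      refine hy (hI ⟨2, ?_⟩)
      rw [show (y * m) ^ 2 = m * y * m * y by ring]
      exact I.mul_mem_right _ hmy
    refine ⟨⟨⟨hp.isPrime, Ideal.le_colon.trans hp.le⟩, ?_⟩, hm⟩
    rintro q ⟨hq, hIq⟩ hqp
    exact hp.2 ⟨hq, colon_singleton_le_of_notMem hIq (mt (@hqp m) hm)⟩ hqp
  · rintro ⟨hp, hm⟩
    have hprime : p.IsPrime := hp.isPrime
    exact ⟨⟨hprime, colon_singleton_le_of_notMem hp.le hm⟩,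
      fun q hq hqp => hp.2 ⟨hq.1, Ideal.le_colon.trans hq.2⟩ hqp⟩

end Colon

section AssociatedPrimes

variable {A : Type*} [CommRing A] {I J p : Ideal A}

lemma mem_associatedPrimes_quotient_iff :
    p ∈ associatedPrimes A (A ⧸ I) ↔ p.IsPrime ∧ ∃ f : A, p = (I.colon {f}).radical := by
  have hcolon (f : A) : (⊥ : Submodule A (A ⧸ I)).colon {Ideal.Quotient.mk I f} = I.colon {f} := by
    ext g
    rw [Submodule.mem_colon_singleton, Submodule.mem_bot, Submodule.mem_colon_singleton,
      smul_eq_mul, ← Ideal.Quotient.eq_zero_iff_mem, map_mul]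
    rfl
  rw [AssociatedPrimes.mem_iff, IsAssociatedPrime, Submodule.isAssociatedPrime_def,
    Ideal.Quotient.mk_surjective.exists]
  simp only [hcolon]

lemma le_of_mem_associatedPrimes_quotient (hp : p ∈ associatedPrimes A (A ⧸ I)) : I ≤ p := by
  obtain ⟨-, f, rfl⟩ := mem_associatedPrimes_quotient_iff.1 hp
  exact Ideal.le_colon.trans Ideal.le_radical

lemma associatedPrimes_quotient_colon_subset (I : Ideal A) (m : A) :
    associatedPrimes A (A ⧸ I.colon {m}) ⊆ associatedPrimes A (A ⧸ I) := by
  intro p hp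
  obtain ⟨hprime, f, hf⟩ := mem_associatedPrimes_quotient_iff.1 hp
  rw [colon_singleton_colon_singleton] at hf
  exact mem_associatedPrimes_quotient_iff.2 ⟨hprime, m * f, hf⟩

/-- `I` has no embedded primes: every associated prime of `A ⧸ I` is minimal over `I`. -/
def HasNoEmbeddedPrimes (I : Ideal A) : Prop :=
  associatedPrimes A (A ⧸ I) ⊆ I.minimalPrimes

lemma hasNoEmbeddedPrimes_of_isRadical (hI : I.IsRadical) : HasNoEmbeddedPrimes I := by
  intro p hp
  obtain ⟨hprime, f, hf⟩ := mem_associatedPrimes_quotient_iff.1 hp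
  have hmin : p ∈ (I.colon {f}).minimalPrimes := by
    rw [← Ideal.radical_minimalPrimes, ← hf, Ideal.minimalPrimes_eq_subsingleton_self]
    rfl
  rw [minimalPrimes_colon_singleton hI] at hmin
  exact hmin.1

lemma HasNoEmbeddedPrimes.of_le (hI : HasNoEmbeddedPrimes I) (hIJ : I ≤ J)
    (hass : associatedPrimes A (A ⧸ J) ⊆ associatedPrimes A (A ⧸ I)) : HasNoEmbeddedPrimes J := by
  intro p hp
  have hpI := hI (hass hp)
  exact ⟨⟨hpI.isPrime, le_of_mem_associatedPrimes_quotient hp⟩,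
    fun q hq hqp => hpI.2 ⟨hq.1, hIJ.trans hq.2⟩ hqp⟩

lemma HasNoEmbeddedPrimes.colon_singleton (hI : HasNoEmbeddedPrimes I) (m : A) :
    HasNoEmbeddedPrimes (I.colon {m}) :=
  hI.of_le Ideal.le_colon (associatedPrimes_quotient_colon_subset I m)

variable [IsNoetherianRing A]

lemma minimalPrimes_subset_associatedPrimes_quotient (I : Ideal A) :
    I.minimalPrimes ⊆ associatedPrimes A (A ⧸ I) := by
  simpa only [Ideal.annihilator_quotient] using
    Module.associatedPrimes.minimalPrimes_annihilator_subset_associatedPrimes A (A ⧸ I)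

lemma HasNoEmbeddedPrimes.associatedPrimes_eq (hI : HasNoEmbeddedPrimes I) :
    associatedPrimes A (A ⧸ I) = I.minimalPrimes :=
  hI.antisymm (minimalPrimes_subset_associatedPrimes_quotient I)

lemma HasNoEmbeddedPrimes.associatedPrimes_radical_colon (hI : HasNoEmbeddedPrimes I) (m : A) :
    associatedPrimes A (A ⧸ I.radical.colon {m}) = {p ∈ associatedPrimes A (A ⧸ I) | m ∉ p} := by
  have hrad : I.radical.IsRadical := I.radical_isRadical
  rw [(hasNoEmbeddedPrimes_of_isRadical (isRadical_colon_singleton hrad m)).associatedPrimes_eq,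
    minimalPrimes_colon_singleton hrad, Ideal.radical_minimalPrimes, hI.associatedPrimes_eq]

end AssociatedPrimes

section Unmixed

lemma ringKrullDim_quotient_eq_coheight {A : Type*} [CommRing A] (p : PrimeSpectrum A) :
    ringKrullDim (A ⧸ p.asIdeal) = Order.coheight p := by
  have hIci : PrimeSpectrum.zeroLocus (p.asIdeal : Set A) = Set.Ici p := rfl
  rw [ringKrullDim_quotient, Order.coheight_eq_krullDim_Ici, hIci]

lemma IsUnmixed.hasNoEmbeddedPrimes {A : Type} [CommRing A] [IsNoetherianRing A]
    [FiniteRingKrullDim A] {I : Ideal A} (hI : IsUnmixed I) : HasNoEmbeddedPrimes I := by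
  intro p hp
  have hprime : p.IsPrime := hp.isPrime
  obtain ⟨q, hq, hqp⟩ := Ideal.exists_minimalPrimes_le (le_of_mem_associatedPrimes_quotient hp)
  let P : PrimeSpectrum A := ⟨p, hprime⟩
  let Q : PrimeSpectrum A := ⟨q, hq.isPrime⟩
  have hdim : Order.coheight Q = Order.coheight P := by
    have hqp_dim : ringKrullDim (A ⧸ Q.asIdeal) = ringKrullDim (A ⧸ P.asIdeal) :=
      (hI q (minimalPrimes_subset_associatedPrimes_quotient I hq)).symm.trans (hI p hp)
    simpa only [ringKrullDim_quotient_eq_coheight, WithBot.coe_inj] using hqp_dim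
  have hQP : ¬ Q < P := fun hlt =>
    (Order.coheight_strictAnti hlt (Order.coheight_lt_top P)).ne' hdim
  have hpq : q = p := congrArg PrimeSpectrum.asIdeal (eq_of_le_of_not_lt hqp hQP)
  rwa [← hpq]

instance finiteRingKrullDim_mvPolynomial {σ K : Type*} [Finite σ] [Field K] :
    FiniteRingKrullDim (MvPolynomial σ K) := by
  rw [finiteRingKrullDim_iff_ne_bot_and_top, MvPolynomial.ringKrullDim_of_isNoetherianRing,
    ringKrullDim_eq_zero_of_field, zero_add]
  exact ⟨WithBot.natCast_ne_bot _, fun h => ENat.natCast_ne_top _ (WithBot.coe_injective h)⟩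

end Unmixed

section SetZero

variable {σ R : Type*} [DecidableEq σ] [CommRing R]

/-- The substitution `X i = 0`, as an endomorphism of the polynomial ring rather than as a map to
the polynomial ring in the remaining variables. -/
noncomputable def setZero (i : σ) : MvPolynomial σ R →ₐ[R] MvPolynomial σ R :=
  aeval (Function.update X i 0)

@[simp]
lemma setZero_X_self (i : σ) : setZero i (X i : MvPolynomial σ R) = 0 := by
  simp [setZero]

lemma setZero_X_of_ne {i j : σ} (hji : j ≠ i) : setZero i (X j : MvPolynomial σ R) = X j := by
  simp [setZero, hji]

lemma setZero_monomial_of_eq_zero {i : σ} {a : σ →₀ ℕ} (ha : a i = 0) (c : R) :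
    setZero i (monomial a c) = monomial a c := by
  rw [setZero, aeval_monomial, monomial_eq, algebraMap_eq]
  congr 1
  refine Finset.prod_congr rfl fun j hj => ?_
  have hji : j ≠ i := by
    rintro rfl
    exact Finsupp.mem_support_iff.1 hj ha
  simp only [Function.update_of_ne hji]

lemma setZero_monomial_of_ne_zero {i : σ} {a : σ →₀ ℕ} (ha : a i ≠ 0) (c : R) :
    setZero i (monomial a c) = 0 := by
  rw [setZero, aeval_monomial, Finsupp.prod,
    Finset.prod_eq_zero (Finsupp.mem_support_iff.2 ha) (by simp [ha]), mul_zero]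

lemma sub_setZero_mem_span_X (i : σ) (f : MvPolynomial σ R) :
    f - setZero i f ∈ Ideal.span {(X i : MvPolynomial σ R)} := by
  let π := Ideal.Quotient.mkₐ R (Ideal.span {(X i : MvPolynomial σ R)})
  have hπ : π = π.comp (setZero i) := by
    refine algHom_ext fun j => ?_
    rcases eq_or_ne j i with rfl | hji
    · rw [AlgHom.comp_apply, setZero_X_self, map_zero]
      exact Ideal.Quotient.eq_zero_iff_mem.2 (Ideal.mem_span_singleton_self _)
    · rw [AlgHom.comp_apply, setZero_X_of_ne hji]
  exact Ideal.Quotient.eq.1 (DFunLike.congr_fun hπ f)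

lemma sup_span_X_eq_comap_setZero {i : σ} {I : Ideal (MvPolynomial σ R)}
    (hI : I ≤ I.comap (setZero i)) : I ⊔ Ideal.span {X i} = I.comap (setZero i) := by
  apply le_antisymm
  · refine sup_le hI ?_
    rw [Ideal.span_singleton_le_iff_mem, Ideal.mem_comap, setZero_X_self]
    exact I.zero_mem
  · intro f hf
    rw [← add_sub_cancel (setZero i f) f]
    exact Submodule.add_mem_sup hf (sub_setZero_mem_span_X i f)

lemma radical_sup_span_X_pow {i : σ} {I : Ideal (MvPolynomial σ R)}
    (hI : I ≤ I.comap (setZero i)) {k : ℕ} (hk : k ≠ 0) :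
    (I ⊔ Ideal.span {X i ^ k}).radical = I.radical.comap (setZero i) := by
  rw [Ideal.comap_radical, ← sup_span_X_eq_comap_setZero hI, ← Ideal.span_singleton_pow,
    Ideal.radical_sup, Ideal.radical_pow _ hk, ← Ideal.radical_sup]

lemma radical_sup_span_X_pow_colon {i : σ} {I : Ideal (MvPolynomial σ R)}
    (hI : I ≤ I.comap (setZero i)) {k : ℕ} (hk : k ≠ 0) {m : MvPolynomial σ R}
    (hm : setZero i m = m) :
    (I ⊔ Ideal.span {X i ^ k}).radical.colon {m} = I.radical.colon {m} ⊔ Ideal.span {X i} := by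
  have hcomap : (I.radical.comap (setZero i)).colon {m} =
      (I.radical.colon {m}).comap (setZero i) := by
    ext f
    simp only [Submodule.mem_colon_singleton, Ideal.mem_comap, smul_eq_mul, map_mul, hm]
  have hrad : I.radical ≤ I.radical.comap (setZero i) := by
    rw [Ideal.comap_radical]
    exact Ideal.radical_mono hI
  have hcolon : I.radical.colon {m} ≤ (I.radical.colon {m}).comap (setZero i) :=
    hcomap ▸ Submodule.colon_mono hrad subset_rfl
  rw [radical_sup_span_X_pow hI hk, hcomap, sup_span_X_eq_comap_setZero hcolon]

end SetZero

section MonomialIdeal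

variable {n : ℕ} {K : Type} [Field K] {I : Ideal (MvPolynomial (Fin n) K)}

lemma isMonomialIdeal_iff :
    IsMonomialIdeal I ↔ ∀ f ∈ I, ∀ a ∈ f.support, monomial a (1 : K) ∈ I := by
  constructor
  · rintro ⟨S, rfl⟩ f hf a ha
    obtain ⟨s, hs, hsa⟩ := mem_ideal_span_monomial_image.1 hf a ha
    refine mem_ideal_span_monomial_image.2 fun b hb => ⟨s, hs, ?_⟩
    rwa [Finset.mem_singleton.1 (support_monomial_subset hb)]
  · intro h
    refine ⟨{a | monomial a (1 : K) ∈ I}, le_antisymm (fun f hf => ?_) ?_⟩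
    · exact mem_ideal_span_monomial_image.2 fun a ha => ⟨a, h f hf a ha, le_rfl⟩
    · rw [Ideal.span_le]
      rintro _ ⟨a, ha, rfl⟩
      exact ha

lemma IsMonomialIdeal.colon_X_pow (hI : IsMonomialIdeal I) (i : Fin n) (k : ℕ) :
    IsMonomialIdeal (I.colon {(X i : MvPolynomial (Fin n) K) ^ k}) := by
  rw [isMonomialIdeal_iff] at hI ⊢
  intro f hf a ha
  rw [Submodule.mem_colon_singleton, smul_eq_mul, X_pow_eq_monomial] at hf ⊢
  rw [monomial_mul, one_mul]
  refine hI _ hf _ ?_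
  rwa [mem_support_iff, coeff_mul_monomial, mul_one, ← mem_support_iff]

lemma IsMonomialIdeal.sup_span_X_pow (hI : IsMonomialIdeal I) (i : Fin n) (k : ℕ) :
    IsMonomialIdeal (I ⊔ Ideal.span {(X i : MvPolynomial (Fin n) K) ^ k}) := by
  obtain ⟨S, rfl⟩ := hI
  refine ⟨S ∪ {Finsupp.single i k}, ?_⟩
  rw [Set.image_union, Set.image_singleton, Ideal.span_union, X_pow_eq_monomial]

lemma IsMonomialIdeal.le_comap_setZero (hI : IsMonomialIdeal I) (i : Fin n) :
    I ≤ I.comap (setZero i) := by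
  obtain ⟨S, rfl⟩ := hI
  rw [Ideal.span_le]
  rintro _ ⟨a, ha, rfl⟩
  rw [SetLike.mem_coe, Ideal.mem_comap]
  by_cases hai : a i = 0
  · rw [setZero_monomial_of_eq_zero hai]
    exact Ideal.subset_span ⟨a, ha, rfl⟩
  · rw [setZero_monomial_of_ne_zero hai]
    exact Ideal.zero_mem _

end MonomialIdeal

section AssDecomposable

variable {n : ℕ} {K : Type} [Field K] {I : Ideal (MvPolynomial (Fin n) K)}

lemma IsAssDecomposable.ne_top (hI : IsAssDecomposable I) : I ≠ ⊤ := by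
  cases hI with
  | primary h => exact h.ne_top
  | step i k hk hx =>
    rintro rfl
    exact hx (Ideal.le_radical Submodule.mem_top)

lemma isAssDecomposable_of_isRadical (hI : I.IsRadical) (i : Fin n)
    (hass : associatedPrimes (MvPolynomial (Fin n) K)
        (MvPolynomial (Fin n) K ⧸ I ⊔ Ideal.span {(X i : MvPolynomial (Fin n) K)}) =
      {p ∈ associatedPrimes (MvPolynomial (Fin n) K) (MvPolynomial (Fin n) K ⧸ I) | X i ∈ p})
    (hsup : IsAssDecomposable (I ⊔ Ideal.span {X i}))
    (hcolon : X i ∉ I → IsAssDecomposable (I.colon {X i})) : IsAssDecomposable I := by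
  by_cases hx : X i ∈ I
  · rwa [sup_eq_left.2 (I.span_singleton_le_iff_mem.2 hx)] at hsup
  · rw [← pow_one (X i)] at hass hsup
    refine .step i 1 le_rfl (by rwa [hI.radical]) ?_ hsup ?_
    · rw [Submodule.add_eq_sup, hass, pow_one]
    · rw [Ideal.colon_span, pow_one]
      exact hcolon hx

lemma isAssDecomposable_radical_colon_of_setZero_eq {i : Fin n} (hI : I ≤ I.comap (setZero i))
    (hemb : HasNoEmbeddedPrimes I) {k : ℕ} (hk : k ≠ 0)
    (hass : associatedPrimes (MvPolynomial (Fin n) K)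
        (MvPolynomial (Fin n) K ⧸ I ⊔ Ideal.span {(X i : MvPolynomial (Fin n) K) ^ k}) =
      {p ∈ associatedPrimes (MvPolynomial (Fin n) K) (MvPolynomial (Fin n) K ⧸ I) | X i ∈ p})
    {m : MvPolynomial (Fin n) K} (hm : setZero i m = m)
    (hsup : IsAssDecomposable ((I ⊔ Ideal.span {X i ^ k}).radical.colon {m}))
    (hcolon : m * X i ∉ I.radical → IsAssDecomposable (I.radical.colon {m * X i})) :
    IsAssDecomposable (I.radical.colon {m}) := by
  have hsup_eq := radical_sup_span_X_pow_colon hI hk hm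
  have hemb_sup : HasNoEmbeddedPrimes (I ⊔ Ideal.span {X i ^ k}) :=
    hemb.of_le le_sup_left (hass ▸ Set.sep_subset _ _)
  refine isAssDecomposable_of_isRadical
    (isRadical_colon_singleton I.radical_isRadical m) i ?_ (hsup_eq ▸ hsup) fun hx => ?_
  · rw [← hsup_eq, hemb_sup.associatedPrimes_radical_colon, hass,
      hemb.associatedPrimes_radical_colon]
    ext p
    exact and_right_comm
  · rw [Submodule.mem_colon_singleton, smul_eq_mul, mul_comm] at hx
    rw [colon_singleton_colon_singleton]
    exact hcolon hx

theorem isAssDecomposable_radical_colon_monomial (hdec : IsAssDecomposable I)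
    (hmon : IsMonomialIdeal I) (hemb : HasNoEmbeddedPrimes I) (a : Fin n →₀ ℕ)
    (ha : monomial a (1 : K) ∉ I.radical) :
    IsAssDecomposable (I.radical.colon {monomial a (1 : K)}) := by
  induction hdec generalizing a with
  | primary h =>
    have hprime := Ideal.isPrime_radical h
    rw [colon_singleton_eq_self_of_isPrime ha]
    exact .primary hprime.isPrimary
  | @step I i k hk _ hass _ _ ih_sup ih_colon =>
    rw [Submodule.add_eq_sup] at hass ih_sup
    rw [Ideal.colon_span] at ih_colon
    have of_X_dvd (b : Fin n →₀ ℕ) (hbi : b i ≠ 0) (hb : monomial b (1 : K) ∉ I.radical) :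
        IsAssDecomposable (I.radical.colon {monomial b (1 : K)}) := by
      have hXb : X i ∣ monomial b (1 : K) := X_dvd_monomial.2 (Or.inr hbi)
      have hcolon_eq := radical_colon_pow_colon_singleton I hXb k
      rw [← hcolon_eq]
      refine ih_colon (hmon.colon_X_pow i k) (hemb.colon_singleton _) b ?_
      rwa [← colon_singleton_eq_top_iff, hcolon_eq, colon_singleton_eq_top_iff]
    by_cases hai : a i = 0
    · have hI := hmon.le_comap_setZero i
      have hk0 : k ≠ 0 := Nat.one_le_iff_ne_zero.1 hk
      have ha0 : setZero i (monomial a (1 : K)) = monomial a 1 :=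
        setZero_monomial_of_eq_zero hai 1
      have hemb_sup : HasNoEmbeddedPrimes (I ⊔ Ideal.span {X i ^ k}) :=
        hemb.of_le le_sup_left (hass ▸ Set.sep_subset _ _)
      refine isAssDecomposable_radical_colon_of_setZero_eq hI hemb hk0 hass ha0 ?_ ?_
      · refine ih_sup (hmon.sup_span_X_pow i k) hemb_sup a ?_
        rwa [radical_sup_span_X_pow hI hk0, Ideal.mem_comap, ha0]
      · rw [← pow_one (X i), ← monomial_add_single]
        exact of_X_dvd _ (by simp)
    · exact of_X_dvd a hai ha

theorem statement_8_general (hmon : IsMonomialIdeal I) (hemb : HasNoEmbeddedPrimes I)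
    (hdec : IsAssDecomposable I) : IsAssDecomposable I.radical := by
  have hone : monomial 0 (1 : K) ∉ I.radical := by
    rw [monomial_zero', C_1, ← Ideal.eq_top_iff_one, Ideal.radical_eq_top]
    exact hdec.ne_top
  have hcolon : I.radical.colon {monomial 0 (1 : K)} = I.radical := by
    ext f
    rw [Submodule.mem_colon_singleton, monomial_zero', C_1, smul_eq_mul, mul_one]
  rw [← hcolon]
  exact isAssDecomposable_radical_colon_monomial hdec hmon hemb 0 hone

end AssDecomposable

/-- The radical of an unmixed ass-decomposable monomial ideal is ass-decomposable. -/
theorem statement_8 (n : ℕ) (K : Type) [Field K] (I : Ideal (MvPolynomial (Fin n) K))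
    (hmon : IsMonomialIdeal I) (hunm : IsUnmixed I) (hdec : IsAssDecomposable I) :
    IsAssDecomposable I.radical :=
  statement_8_general hmon hunm.hasNoEmbeddedPrimes hdec

end Paper
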